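/- Let r > 0 be an odd integer and let G be an r-regular multigraph that has no 1-factor (perfect matching). Then χ'(G,𝟏) = r+1, where 𝟏 denotes the all-positive signature; hence the bound χ'(G,σ) ≤ Δ(G)+1 for balanced signed multigraphs is best possible. -/

import Mathlib

/-!
In an all-positive signed graph the two half-edges of an edge carry opposite colors, so an edge with
a non-self-inverse color is a directed edge, and the colors `±s_i` form a subgraph whose in- and
out-degrees are at most `1`.

*Upper bound.* Write `r + 1 = 2k`. Two copies of `G`, with each vertex joined to its copy, form a
`2k`-regular multigraph. By Hall's theorem every edge can be assigned to one of its ends so that each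
vertex receives at most `k` edges, and by counting exactly `k`; this is an orientation with all in-
and out-degrees equal to `k` (`exists_balanced_orientation`). Viewing tails and heads as the two sides
of a `k`-regular bipartite multigraph and removing perfect matchings one at a time, again by Hall,
splits the edges into `k` classes on which tail and head are injective
(`exists_coloring_of_biregular`). Those classes are the pairs `±s_i`, and the coloring restricts to
one copy of `G`.

*Lower bound.* The `r` half-edges at a vertex have distinct values, so at least `r` colors are
needed. If exactly `r` colors are used, then `r` being odd forces a self-inverse color `0`, and every
color occurs at every vertex; the edges colored `0` then form a `1`-factor, since a loop cannot have
color `0` (`exists_one_factor_of_hasColoring`).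
-/


/-- A multigraph on vertex type `V` with edge type `E`.  Each edge `e` has two
half-edges, indexed by `Bool`; `ends e b` is the vertex incident to the
half-edge `(e, b)`.  Loops (`ends e true = ends e false`) and parallel edges
are allowed. -/
structure Multigraph (V E : Type*) where
  ends : E → Bool → V

/-- The symmetric set `S^t_{2k}`: `t` self-inverse colors `0_1, …, 0_t`
(the elements `Sum.inl i`) and `k` pairs `±s_1, …, ±s_k` of non-self-inverse
colors (the elements `Sum.inr (i, b)`). -/
abbrev SymColor (t k : ℕ) := Fin t ⊕ (Fin k × Bool)

/-- Negation on a symmetric set: self-inverse elements are fixed,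
and `s_i = Sum.inr (i, true)` is interchanged with `-s_i = Sum.inr (i, false)`. -/
def symNeg {t k : ℕ} : SymColor t k → SymColor t k
  | Sum.inl a => Sum.inl a
  | Sum.inr (i, b) => Sum.inr (i, !b)

/-- The signature induced by a bidirection `τ`: `σ(e) = -(τ(h_e(v))·τ(h_e(w)))`. -/
def signOf {E : Type*} (τ : E → Bool → ℤˣ) (e : E) : ℤˣ :=
  -(τ e true * τ e false)

/-- The value `τ(h_e(v))·c(e)` of the half-edge `(e, b)` under a coloring `c`
with respect to the bidirection `τ`. -/
def hval {E : Type*} {t k : ℕ} (τ : E → Bool → ℤˣ) (c : E → SymColor t k)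
    (e : E) (b : Bool) : SymColor t k :=
  if τ e b = 1 then c e else symNeg (c e)

namespace Multigraph

variable {V E : Type*} [Fintype V] [Fintype E] [DecidableEq V] [DecidableEq E]

/-- The degree of a vertex: the number of half-edges incident to it
(a loop contributes `2`). -/
def degree (G : Multigraph V E) (v : V) : ℕ :=
  (Finset.univ.filter fun h : E × Bool => G.ends h.1 h.2 = v).card

/-- The maximum degree `Δ(G)`. -/
def maxDegree (G : Multigraph V E) : ℕ :=
  Finset.univ.sup fun v => G.degree v

/-- The degree of a vertex in the spanning subgraph with edge set `S`. -/
def degOn (G : Multigraph V E) (S : Finset E) (v : V) : ℕ :=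
  (Finset.univ.filter fun h : E × Bool => h.1 ∈ S ∧ G.ends h.1 h.2 = v).card

/-- `v` is incident with an edge of `S`. -/
def IncidentOn (G : Multigraph V E) (S : Finset E) (v : V) : Prop :=
  ∃ e ∈ S, ∃ b, G.ends e b = v

/-- Two vertices joined by an edge of `S`. -/
def AdjOn (G : Multigraph V E) (S : Finset E) (u w : V) : Prop :=
  ∃ e ∈ S, (G.ends e true = u ∧ G.ends e false = w) ∨
    (G.ends e true = w ∧ G.ends e false = u)

/-- The edge set `S` forms a circuit: it is nonempty, the subgraph it induces
is `2`-regular, and it is connected. -/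
def IsCircuit (G : Multigraph V E) (S : Finset E) : Prop :=
  S.Nonempty ∧ (∀ v, G.IncidentOn S v → G.degOn S v = 2) ∧
    ∀ u w, G.IncidentOn S u → G.IncidentOn S w →
      Relation.ReflTransGen (G.AdjOn S) u w

/-- A signed multigraph `(G, σ)` is balanced if every circuit is positive. -/
def IsBalanced (G : Multigraph V E) (σ : E → ℤˣ) : Prop :=
  ∀ S : Finset E, G.IsCircuit S → ∏ e ∈ S, σ e = 1

/-- Resigning a signature at a vertex `v`: every non-loop edge incident with
`v` changes its sign; loops at `v` and edges not incident with `v` are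
unchanged. -/
def resign (G : Multigraph V E) (σ : E → ℤˣ) (v : V) : E → ℤˣ := fun e =>
  (if G.ends e true = v then -1 else 1) * σ e *
    (if G.ends e false = v then -1 else 1)

/-- Two signatures are equivalent if one is obtained from the other by a
(finite) sequence of resignings at vertices. -/
def Equivalent (G : Multigraph V E) (σ₁ σ₂ : E → ℤˣ) : Prop :=
  Relation.ReflTransGen (fun σ σ' => ∃ v, σ' = G.resign σ v) σ₁ σ₂

/-- `c` is an `S^t_{2k}`-coloring of `(G, σ)` with bidirection `τ` (where
`σ = signOf τ`): any two distinct half-edges incident with the same vertex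
receive distinct values `τ(h)·c(e)`. -/
def IsProperColoring (G : Multigraph V E) (τ : E → Bool → ℤˣ) {t k : ℕ}
    (c : E → SymColor t k) : Prop :=
  ∀ e₁ b₁ e₂ b₂, ((e₁, b₁) : E × Bool) ≠ (e₂, b₂) →
    G.ends e₁ b₁ = G.ends e₂ b₂ → hval τ c e₁ b₁ ≠ hval τ c e₂ b₂

/-- `(G, σ)` admits an `S^t_{2k}`-coloring (with respect to some bidirection
inducing `σ`). -/
def HasColoring (G : Multigraph V E) (σ : E → ℤˣ) (t k : ℕ) : Prop :=
  ∃ τ : E → Bool → ℤˣ, (∀ e, σ e = signOf τ e) ∧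
    ∃ c : E → SymColor t k, G.IsProperColoring τ c

/-- `χ'_i(G, σ)`: the minimum `2k + i` such that `(G, σ)` admits an
`S^i_{2k}`-coloring. -/
noncomputable def chiSub (G : Multigraph V E) (σ : E → ℤˣ) (i : ℕ) : ℕ :=
  sInf {n : ℕ | ∃ k, n = 2 * k + i ∧ G.HasColoring σ i k}

/-- The chromatic index `χ'(G, σ) = min{χ'_0(G, σ), χ'_1(G, σ)}`. -/
noncomputable def chromaticIndex (G : Multigraph V E) (σ : E → ℤˣ) : ℕ :=
  min (G.chiSub σ 0) (G.chiSub σ 1)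

/-- A matching: a set of pairwise non-adjacent non-loop edges. -/
def IsMatching (G : Multigraph V E) (M : Finset E) : Prop :=
  (∀ e ∈ M, G.ends e true ≠ G.ends e false) ∧
    ∀ e₁ ∈ M, ∀ e₂ ∈ M, e₁ ≠ e₂ → ∀ b₁ b₂, G.ends e₁ b₁ ≠ G.ends e₂ b₂

end Multigraph

namespace Multigraph

open Finset

/-! ### Colorings of regular multigraphs -/

section Upper

/-- A `k`-regular bipartite multigraph, with edge set `F` and sides indexed by `V` through `p` and
`q`, has a proper edge coloring with `k` colors. -/
theorem exists_coloring_of_biregular {V E : Type*} [Fintype V] [Fintype E] [DecidableEq V]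
    [DecidableEq E] (p q : E → V) (k : ℕ) : ∀ F : Finset E,
    (∀ v, #{e ∈ F | p e = v} = k) → (∀ v, #{e ∈ F | q e = v} = k) →
    ∃ c : E → ℕ, (∀ e ∈ F, c e < k) ∧
      ∀ e ∈ F, ∀ e' ∈ F, c e = c e' → (p e = p e' ∨ q e = q e') → e = e' := by
  induction k with
  | zero =>
    intro F hp hq
    have hF : ∀ e, e ∉ F := by
      intro e he
      have := hp (p e)
      rw [card_eq_zero] at this
      exact (Finset.eq_empty_iff_forall_notMem.1 this e) (by simp [he])
    exact ⟨fun _ => 0, fun e he => (hF e he).elim, fun e he => (hF e he).elim⟩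
  | succ k ih =>
    intro F hp hq
    have hall : ∀ s : Finset V,
        #s ≤ #(s.biUnion fun v => {e ∈ F | p e = v}.image q) := by
      intro s
      set N := s.biUnion fun v => {e ∈ F | p e = v}.image q with hN
      have h1 : #{e ∈ F | p e ∈ s} = ∑ v ∈ s, #{e ∈ {e ∈ F | p e ∈ s} | p e = v} :=
        card_eq_sum_card_fiberwise (by intro e he; simpa using (by simpa using he : _ ∧ _).2)
      have h2 : ∑ v ∈ s, #{e ∈ {e ∈ F | p e ∈ s} | p e = v} = ∑ v ∈ s, (k + 1) := by
        refine sum_congr rfl fun v hv => ?_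
        rw [← hp v, filter_filter]
        congr 1
        ext e
        simp only [mem_filter]
        constructor
        · rintro ⟨a, _, b⟩; exact ⟨a, b⟩
        · rintro ⟨a, b⟩; exact ⟨a, b ▸ hv, b⟩
      have h3 : #{e ∈ F | q e ∈ N} = ∑ v ∈ N, #{e ∈ {e ∈ F | q e ∈ N} | q e = v} :=
        card_eq_sum_card_fiberwise (by intro e he; simpa using (by simpa using he : _ ∧ _).2)
      have h4 : ∑ v ∈ N, #{e ∈ {e ∈ F | q e ∈ N} | q e = v} ≤ ∑ v ∈ N, (k + 1) := by
        refine sum_le_sum fun v hv => ?_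
        rw [← hq v]
        exact card_le_card (filter_subset_filter _ (filter_subset _ _))
      have h5 : #{e ∈ F | p e ∈ s} ≤ #{e ∈ F | q e ∈ N} := by
        refine card_le_card fun e he => ?_
        simp only [mem_filter] at he ⊢
        refine ⟨he.1, mem_biUnion.2 ⟨p e, he.2, mem_image.2 ⟨e, by simp [he.1], rfl⟩⟩⟩
      simp only [sum_const, smul_eq_mul] at h2 h4
      have : #s * (k + 1) ≤ #N * (k + 1) := by omega
      exact Nat.le_of_mul_le_mul_right this (Nat.succ_pos k)
    obtain ⟨g, ginj, hg⟩ := (Finset.all_card_le_biUnion_card_iff_exists_injective _).1 hall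
    have hg' : ∀ v, ∃ e, e ∈ F ∧ p e = v ∧ q e = g v := by
      intro v
      obtain ⟨e, he, h⟩ := mem_image.1 (hg v)
      exact ⟨e, (mem_filter.1 he).1, (mem_filter.1 he).2, h⟩
    choose m hmF hmp hmq using hg'
    have gsurj : Function.Surjective g := Finite.surjective_of_injective ginj
    -- `m v` is the edge of the perfect matching that has `v` as its end on the first side
    have hpm : ∀ v, #{e ∈ F \ univ.image m | p e = v} = k := by
      intro v
      have : {e ∈ F \ univ.image m | p e = v} = {e ∈ F | p e = v}.erase (m v) := by
        ext e
        simp only [mem_filter, mem_sdiff, mem_image, mem_univ, true_and, mem_erase]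
        constructor
        · rintro ⟨⟨a, b⟩, c⟩; exact ⟨fun h => b ⟨v, h.symm⟩, a, c⟩
        · rintro ⟨a, b, c⟩
          refine ⟨⟨b, ?_⟩, c⟩
          rintro ⟨w, rfl⟩
          rw [hmp] at c
          exact a (by rw [c])
      rw [this, card_erase_of_mem (by simp [hmF, hmp]), hp]; rfl
    have hqm : ∀ v, #{e ∈ F \ univ.image m | q e = v} = k := by
      intro v
      obtain ⟨u, rfl⟩ := gsurj v
      have : {e ∈ F \ univ.image m | q e = g u} = {e ∈ F | q e = g u}.erase (m u) := by
        ext e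
        simp only [mem_filter, mem_sdiff, mem_image, mem_univ, true_and, mem_erase]
        constructor
        · rintro ⟨⟨a, b⟩, c⟩; exact ⟨fun h => b ⟨u, h.symm⟩, a, c⟩
        · rintro ⟨a, b, c⟩
          refine ⟨⟨b, ?_⟩, c⟩
          rintro ⟨w, rfl⟩
          rw [hmq] at c
          exact a (by rw [ginj c])
      rw [this, card_erase_of_mem (by simp [hmF, hmq]), hq]; rfl
    obtain ⟨c, hc, hcc⟩ := ih _ hpm hqm
    refine ⟨fun e => if e ∈ univ.image m then k else c e, ?_, ?_⟩
    · intro e he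
      by_cases h : e ∈ univ.image m
      · simp only [h, if_true]; omega
      · simp only [h, if_false]
        have := hc e (mem_sdiff.2 ⟨he, h⟩)
        omega
    · intro e he e' he' h hpq
      by_cases h1 : e ∈ univ.image m <;> by_cases h2 : e' ∈ univ.image m <;>
        simp only [h1, h2, if_true, if_false] at h
      · obtain ⟨v, -, rfl⟩ := mem_image.1 h1
        obtain ⟨w, -, rfl⟩ := mem_image.1 h2
        rw [hmp, hmp, hmq, hmq] at hpq
        rcases hpq with rfl | hpq
        · rfl
        · rw [ginj hpq]
      · have := hc e' (mem_sdiff.2 ⟨he', h2⟩); omega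
      · have := hc e (mem_sdiff.2 ⟨he, h1⟩); omega
      · exact hcc e (mem_sdiff.2 ⟨he, h1⟩) e' (mem_sdiff.2 ⟨he', h2⟩) h hpq

variable {V E : Type*} [Fintype V] [Fintype E] [DecidableEq V] [DecidableEq E]

theorem degree_eq_sum {V E : Type*} [Fintype E] [DecidableEq V] (G : Multigraph V E) (v : V) :
    G.degree v = ∑ e, ((if G.ends e true = v then 1 else 0) +
      (if G.ends e false = v then 1 else 0)) := by
  rw [degree, card_filter, Fintype.sum_prod_type]
  simp only [Fintype.sum_bool]

/-- Whatever the orientation `o` (the tail of `e` is `ends e (o e)`), the degree is the out-degree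
plus the in-degree. -/
theorem degree_eq_add {V E : Type*} [Fintype E] [DecidableEq V] (G : Multigraph V E) (o : E → Bool) (v : V) :
    G.degree v = #{e | G.ends e (o e) = v} + #{e | G.ends e (!o e) = v} := by
  rw [degree_eq_sum, card_filter, card_filter, ← sum_add_distrib]
  refine sum_congr rfl fun e _ => ?_
  cases o e <;> simp [add_comm]

/-- A `2k`-regular multigraph has an orientation with all in- and out-degrees equal to `k`. -/
theorem exists_balanced_orientation (G : Multigraph V E) (k : ℕ) (hreg : ∀ v, G.degree v = 2 * k) :
    ∃ o : E → Bool, (∀ v, #{e | G.ends e (o e) = v} = k) ∧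
      ∀ v, #{e | G.ends e (!o e) = v} = k := by
  let t : E → Finset (V × Fin k) := fun e => {G.ends e true, G.ends e false} ×ˢ univ
  have hall : ∀ s : Finset E, #s ≤ #(s.biUnion t) := by
    intro s
    set N : Finset V := s.biUnion fun e => {G.ends e true, G.ends e false} with hN
    have h1 : s.biUnion t = N ×ˢ univ := by
      ext ⟨v, i⟩; simp [t, hN]
    rw [h1, card_product, card_univ, Fintype.card_fin]
    have h2 : #(s ×ˢ (univ : Finset Bool)) ≤ ∑ v ∈ N, G.degree v := by
      rw [card_eq_sum_card_fiberwise (f := fun h => G.ends h.1 h.2) (t := N)]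
      · exact sum_le_sum fun v _ => card_le_card (filter_subset_filter _ (subset_univ _))
      · rintro ⟨e, b⟩ he
        have he : e ∈ s := by simpa using he
        refine mem_coe.2 (mem_biUnion.2 ⟨e, he, ?_⟩)
        cases b <;> simp
    simp only [hreg, sum_const, smul_eq_mul, card_product, card_univ, Fintype.card_bool] at h2
    have : #N * (2 * k) = 2 * (#N * k) := by ring
    omega
  obtain ⟨f, finj, hf⟩ := (Finset.all_card_le_biUnion_card_iff_exists_injective _).1 hall
  have hf' : ∀ e, ∃ b, G.ends e b = (f e).1 := by
    intro e
    have := hf e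
    simp only [t, mem_product, mem_insert, mem_singleton] at this
    rcases this.1 with h | h
    exacts [⟨_, h.symm⟩, ⟨_, h.symm⟩]
  choose o ho using hf'
  have hle : ∀ v, #{e | G.ends e (o e) = v} ≤ k := by
    intro v
    calc #{e | G.ends e (o e) = v} ≤ #(univ : Finset (Fin k)) := by
          refine card_le_card_of_injOn (fun e => (f e).2) (fun _ _ => by simp) ?_
          intro e he e' he' h
          have he : G.ends e (o e) = v := by simpa using he
          have he' : G.ends e' (o e') = v := by simpa using he'
          rw [ho] at he he'
          exact finj (Prod.ext (he.trans he'.symm) h)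
      _ = k := by simp
  have hsum1 : ∑ v, #{e | G.ends e (o e) = v} = Fintype.card E :=
    (card_eq_sum_card_fiberwise (fun _ _ => by simp)).symm
  have hsum2 : ∑ v, #{e | G.ends e (!o e) = v} = Fintype.card E :=
    (card_eq_sum_card_fiberwise (fun _ _ => by simp)).symm
  -- Summing out- and in-degrees over all vertices gives `2|E| = 2k|V|`, so no out-degree is below `k`.
  have hsum : ∑ v, #{e | G.ends e (o e) = v} = ∑ _v : V, k := by
    have h : ∑ v, (#{e | G.ends e (o e) = v} + #{e | G.ends e (!o e) = v}) = ∑ _v : V, 2 * k :=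
      sum_congr rfl fun v _ => by rw [← degree_eq_add, hreg]
    rw [sum_add_distrib, ← mul_sum] at h
    omega
  have hout := (sum_eq_sum_iff_of_le fun v _ => hle v).1 hsum
  refine ⟨o, fun v => hout v (mem_univ v), fun v => ?_⟩
  have h1 := degree_eq_add G o v
  have h2 := hout v (mem_univ v)
  have h3 := hreg v
  omega

/-- A `2k`-regular all-positive multigraph can be colored with the `k` pairs `±s_i` alone. -/
theorem hasColoring_of_regular (G : Multigraph V E) (k t : ℕ) (hreg : ∀ v, G.degree v = 2 * k) :
    G.HasColoring (fun _ => 1) t k := by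
  obtain ⟨o, ho1, ho2⟩ := G.exists_balanced_orientation k hreg
  obtain ⟨c, hc, hcc⟩ := exists_coloring_of_biregular (fun e => G.ends e (o e))
    (fun e => G.ends e (!o e)) k univ ho1 ho2
  refine ⟨fun e b => if b = o e then 1 else -1, ?_,
    fun e => Sum.inr (⟨c e, hc e (mem_univ e)⟩, true), ?_⟩
  · intro e
    cases h : o e <;> simp [signOf, h]
  · have hv : ∀ e b, hval (t := t) (fun e b => if b = o e then (1 : ℤˣ) else -1)
        (fun e => Sum.inr ((⟨c e, hc e (mem_univ e)⟩ : Fin k), true)) e b =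
        Sum.inr (⟨c e, hc e (mem_univ e)⟩, decide (b = o e)) := by
      intro e b
      by_cases h : b = o e <;> simp [hval, symNeg, h]
    intro e₁ b₁ e₂ b₂ hne hends h
    rw [hv, hv] at h
    simp only [Sum.inr.injEq, Prod.mk.injEq, Fin.mk.injEq, decide_eq_decide] at h
    obtain ⟨hcol, hb⟩ := h
    have he : e₁ = e₂ := by
      refine hcc e₁ (mem_univ _) e₂ (mem_univ _) hcol ?_
      by_cases h1 : b₁ = o e₁
      · left
        have h2 := hb.1 h1
        simpa [← h1, ← h2] using hends
      · right
        have h2 : b₂ ≠ o e₂ := fun h => h1 (hb.2 h)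
        have h1' : b₁ = !o e₁ := by revert h1; cases b₁ <;> cases o e₁ <;> simp
        have h2' : b₂ = !o e₂ := by revert h2; cases b₂ <;> cases o e₂ <;> simp
        simpa [← h1', ← h2'] using hends
    subst he
    apply hne
    have : b₁ = b₂ := by
      revert hb; cases b₁ <;> cases b₂ <;> cases o e₁ <;> simp
    rw [this]

/-- Two disjoint copies of `G`, each vertex being joined to its copy by one new edge. -/
def double (G : Multigraph V E) : Multigraph (V × Bool) (E × Bool ⊕ V) where
  ends := Sum.elim (fun e b => (G.ends e.1 b, e.2)) (fun v b => (v, b))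

theorem degree_double (G : Multigraph V E) (v : V) (i : Bool) :
    G.double.degree (v, i) = G.degree v + 1 := by
  rw [degree_eq_sum, degree_eq_sum, Fintype.sum_sum_type, Fintype.sum_prod_type]
  congr 1
  · refine sum_congr rfl fun e _ => ?_
    cases i <;> simp [double]
  · cases i <;> simp [double]

theorem hasColoring_of_double {V E : Type*} (G : Multigraph V E) (t k : ℕ)
    (h : G.double.HasColoring (fun _ => 1) t k) : G.HasColoring (fun _ => 1) t k := by
  obtain ⟨τ, hτ, c, hc⟩ := h
  refine ⟨fun e => τ (Sum.inl (e, true)), fun e => hτ _, fun e => c (Sum.inl (e, true)), ?_⟩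
  intro e₁ b₁ e₂ b₂ hne hends
  refine hc (Sum.inl (e₁, true)) b₁ (Sum.inl (e₂, true)) b₂ ?_ ?_
  · simpa using hne
  · simpa [double] using hends

end Upper

/-! ### Too few colors force a one-factor -/

section Lower

variable {V E : Type*} [Fintype E] [DecidableEq V]

theorem IsProperColoring.injOn {G : Multigraph V E} {τ : E → Bool → ℤˣ} {t k : ℕ}
    {c : E → SymColor t k} (hc : G.IsProperColoring τ c) (v : V) :
    Set.InjOn (fun h : E × Bool => hval τ c h.1 h.2)
      ((univ.filter fun h : E × Bool => G.ends h.1 h.2 = v : Finset (E × Bool)) : Set (E × Bool)) := by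
  rintro ⟨e₁, b₁⟩ h₁ ⟨e₂, b₂⟩ h₂ h
  by_contra hne
  simp only [coe_filter, mem_univ, true_and, Set.mem_ofPred_eq] at h₁ h₂
  exact hc e₁ b₁ e₂ b₂ hne (h₁.trans h₂.symm) h

theorem degree_le_of_hasColoring (G : Multigraph V E) (σ : E → ℤˣ) (t k : ℕ)
    (h : G.HasColoring σ t k) (v : V) : G.degree v ≤ 2 * k + t := by
  obtain ⟨τ, -, c, hc⟩ := h
  have := card_le_card_of_injOn (t := (univ : Finset (SymColor t k))) _
    (fun _ _ => by simp) (hc.injOn v)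
  simp only [card_univ, Fintype.card_sum, Fintype.card_prod, Fintype.card_fin,
    Fintype.card_bool] at this
  simp only [degree]
  omega

/-- If the number of colors equals every degree, then the self-inverse color occurs at every vertex,
and its class is a `1`-factor. -/
theorem exists_one_factor_of_hasColoring (G : Multigraph V E) (σ : E → ℤˣ) (k : ℕ)
    (hreg : ∀ v, G.degree v = 2 * k + 1) (h : G.HasColoring σ 1 k) :
    ∃ M : Finset E, G.IsMatching M ∧ ∀ v, ∃ e ∈ M, ∃ b, G.ends e b = v := by
  obtain ⟨τ, -, c, hc⟩ := h
  have hz : ∀ e b, hval τ c e b = Sum.inl 0 ↔ c e = Sum.inl 0 := by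
    intro e b
    unfold hval
    split_ifs
    · rfl
    · rcases c e with a | ⟨i, b⟩ <;> simp [symNeg]
  refine ⟨univ.filter fun e => c e = Sum.inl 0, ⟨?_, ?_⟩, ?_⟩
  · intro e he hl
    have he : c e = Sum.inl 0 := by simpa using he
    exact hc e true e false (by simp) hl (((hz e _).2 he).trans ((hz e _).2 he).symm)
  · intro e₁ h₁ e₂ h₂ hne b₁ b₂ hl
    have h₁ : c e₁ = Sum.inl 0 := by simpa using h₁
    have h₂ : c e₂ = Sum.inl 0 := by simpa using h₂
    exact hc e₁ b₁ e₂ b₂ (by simp [hne]) hl (((hz e₁ _).2 h₁).trans ((hz e₂ _).2 h₂).symm)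
  · intro v
    have hsurj := surjOn_of_injOn_of_card_le (t := (univ : Finset (SymColor 1 k))) _
      (fun _ _ => by simp) (hc.injOn v) (by
        have := hreg v
        simp only [degree] at this
        simp only [card_univ, Fintype.card_sum, Fintype.card_prod, Fintype.card_fin,
          Fintype.card_bool, this]
        omega)
    obtain ⟨⟨e, b⟩, he, h⟩ := hsurj (mem_coe.2 (mem_univ (Sum.inl 0)))
    exact ⟨e, by simpa using (hz e b).1 h, b, by simpa using he⟩

end Lower

end Multigraph

/-! ### The chromatic index -/

/-- **sharpness of the König-type bound.**
If `r > 0` is odd and `G` is an `r`-regular multigraph with no `1`-factor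
(perfect matching), then `χ'(G, 𝟏) = r + 1`, where `𝟏` is the all-positive
signature. -/
theorem chromaticIndex_all_positive_of_regular_no_one_factor
    {V E : Type*} [Fintype V] [Fintype E] [DecidableEq V] [DecidableEq E]
    (G : Multigraph V E) (r : ℕ) (hr : 0 < r) (hodd : Odd r)
    (hreg : ∀ v, G.degree v = r)
    (hnf : ¬ ∃ M : Finset E, G.IsMatching M ∧ ∀ v, ∃ e ∈ M, ∃ b, G.ends e b = v) :
    G.chromaticIndex (fun _ => 1) = r + 1 := by
  obtain ⟨k, rfl⟩ := hodd
  -- On an empty vertex set the empty matching is a `1`-factor.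
  have hV : Nonempty V := by
    by_contra hV
    rw [not_nonempty_iff] at hV
    exact hnf ⟨∅, ⟨by simp, by simp⟩, fun v => isEmptyElim v⟩
  obtain ⟨v⟩ := hV
  have hcol : ∀ t, G.HasColoring (fun _ => 1) t (k + 1) := fun t =>
    G.hasColoring_of_double t (k + 1) <| G.double.hasColoring_of_regular (k + 1) t <| by
      rintro ⟨v, i⟩
      rw [Multigraph.degree_double, hreg]
      ring
  have h0 : G.chiSub (fun _ => 1) 0 = 2 * k + 1 + 1 := by
    refine le_antisymm (Nat.sInf_le ⟨k + 1, by ring, hcol 0⟩) ?_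
    refine le_csInf ⟨_, k + 1, rfl, hcol 0⟩ ?_
    rintro n ⟨j, rfl, hj⟩
    have := G.degree_le_of_hasColoring _ _ _ hj v
    rw [hreg] at this
    omega
  have h1 : 2 * k + 1 + 1 ≤ G.chiSub (fun _ => 1) 1 := by
    refine le_csInf ⟨_, k + 1, rfl, hcol 1⟩ ?_
    rintro n ⟨j, rfl, hj⟩
    have := G.degree_le_of_hasColoring _ _ _ hj v
    rw [hreg] at this
    rcases Nat.lt_or_ge k j with h | h
    · omega
    · obtain rfl : j = k := by omega
      exact (hnf (G.exists_one_factor_of_hasColoring _ _ hreg hj)).elim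
  rw [Multigraph.chromaticIndex, h0, min_eq_left h1]
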